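/- arXiv:1802.05702 — 4 statements merged into one kernel-verified Lean document; each statement's English description precedes it below -/
import Mathlib

section
/- Let A be a commutative ring and f₁,…,fₙ ∈ A a regular sequence. Regard A as an algebra over the polynomial ring P = ℤ[T₁,…,Tₙ] via the ring homomorphism sending Tᵢ to fᵢ. Then Torᵢ^P(A, P/(T₁,…,Tₙ)) = 0 for every i > 0. (Equivalently: the Koszul complex of a regular sequence is acyclic in positive degrees, i.e. the derived quotient A⫽(f₁,…,fₙ) agrees with the classical quotient A/(f₁,…,fₙ).) -/
open CategoryTheory CategoryTheory.Limits

/-!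
The multiplications by `r` on `X` and on `Y` induce the same map on `Tor i X Y`, which is therefore
zero as soon as `r` kills `Y`. If moreover `r` is regular on `X`, the long exact sequence of
`0 ⟶ X ⟶ X ⟶ X / rX ⟶ 0` shows that this zero map is injective when `Tor (i + 1) (X / rX) Y`
vanishes, and then `Tor i X Y` vanishes. Iterating along a sequence `rs` that is weakly regular on
`X` and kills `Y` shifts the question to degree `i + rs.length`. There it is settled by projective
dimension: when `rs` is also weakly regular on the base ring `P`, as the variables of a polynomial
ring are, `Y = P / (rs)` has projective dimension at most `rs.length`.
-/

universe v u

section LeftDerived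

variable {C D : Type*} [Category* C] [Abelian C] [Category* D] [Abelian D]

lemma exists_d_comp_eq_cokernel_π {Y : C} (P : ProjectiveResolution Y) (n : ℕ)
    [HasProjectiveDimensionLT Y (n + 1)] :
    ∃ s : P.complex.X n ⟶ cokernel (P.complex.d (n + 2) (n + 1)),
      P.complex.d (n + 1) n ≫ s = cokernel.π _ := by
  let := HasExt.standard C
  -- `cokernel.π _` is a cocycle, and its class in `Ext (n + 1)` vanishes.
  rw [← P.extMk_eq_zero_iff _ (n + 2) rfl (cokernel.condition _) n rfl]
  exact Abelian.Ext.eq_zero_of_hasProjectiveDimensionLT _ (n + 1) le_rfl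

lemma map_exact_of_comp_eq_cokernel_π {S : ShortComplex C} (F : C ⥤ D) [F.Additive]
    [PreservesFiniteColimits F] {s : S.X₃ ⟶ cokernel S.f} (hs : S.g ≫ s = cokernel.π S.f) :
    (S.map F).Exact := by
  have hcoker : ((ShortComplex.mk _ _ (cokernel.condition S.f)).map F).Exact :=
    (ShortComplex.exact_cokernel S.f).map_of_epi_of_preservesCokernel F
      (by dsimp only; infer_instance) inferInstance
  rw [ShortComplex.exact_iff_exact_up_to_refinements] at hcoker ⊢
  intro A (x : A ⟶ F.obj S.X₂) (hx : x ≫ F.map S.g = 0)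
  have hx' : x ≫ F.map (cokernel.π S.f) = 0 := by
    rw [← hs, F.map_comp, reassoc_of% hx, zero_comp]
  exact hcoker x hx'

lemma isZero_leftDerived_obj_of_hasProjectiveDimensionLT [HasProjectiveResolutions C]
    (F : C ⥤ D) [F.Additive] [PreservesFiniteColimits F] (Y : C) (n : ℕ)
    [HasProjectiveDimensionLT Y (n + 1)] :
    IsZero ((F.leftDerived (n + 1)).obj Y) := by
  let P := projectiveResolution Y
  obtain ⟨s, hs⟩ := exists_d_comp_eq_cokernel_π P n
  refine IsZero.of_iso ?_ (P.isoLeftDerivedObj F (n + 1))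
  refine (HomologicalComplex.exactAt_iff_isZero_homology _ _).1 ?_
  rw [HomologicalComplex.exactAt_iff' _ (n + 2) (n + 1) n (by simp) (by simp)]
  exact map_exact_of_comp_eq_cokernel_π (S := P.complex.sc' (n + 2) (n + 1) n) F hs

lemma mono_leftDerived_app_of_isZero [HasProjectiveResolutions C] {F G H : C ⥤ D}
    [F.Additive] [G.Additive] [H.Additive] {α : F ⟶ G} {β : G ⟶ H} (w : α ≫ β = 0)
    (hαβ : ∀ P : C, Projective P →
      ((ShortComplex.mk α β w).map ((evaluation C D).obj P)).ShortExact)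
    {Y : C} {i : ℕ} (hY : IsZero ((H.leftDerived (i + 1)).obj Y)) :
    Mono ((NatTrans.leftDerived α i).app Y) := by
  let P := projectiveResolution Y
  let S : ShortComplex (ChainComplex D ℕ) := ShortComplex.mk
    ((NatTrans.mapHomologicalComplex α _).app P.complex)
    ((NatTrans.mapHomologicalComplex β _).app P.complex)
    (HomologicalComplex.hom_ext _ _ fun j => congr_app w (P.complex.X j))
  have hS : S.ShortExact :=
    HomologicalComplex.shortExact_of_degreewise_shortExact _ fun j =>
      hαβ (P.complex.X j) inferInstance
  have hmono : Mono ((HomologicalComplex.homologyFunctor D _ i).map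
      ((NatTrans.mapHomologicalComplex α _).app P.complex)) :=
    (hS.homology_exact₁ (i + 1) i rfl).mono_g
      ((hY.of_iso (P.isoLeftDerivedObj H (i + 1)).symm).eq_of_src _ _)
  rw [P.leftDerived_app_eq α i]
  infer_instance

lemma leftDerived_map_zero [HasProjectiveResolutions C] (F : C ⥤ D) [F.Additive]
    (n : ℕ) (X Y : C) :
    (F.leftDerived n).map (0 : X ⟶ Y) = 0 := by
  rw [F.leftDerived_map_eq n (0 : X ⟶ Y) (P := projectiveResolution X)
    (Q := projectiveResolution Y) 0 (by simp), Functor.map_zero, zero_comp, comp_zero]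

end LeftDerived

section Tor

open MonoidalCategory

lemma Tor_map_smul_id_app {R C : Type*} [CommRing R] [Category* C] [Abelian C]
    [HasProjectiveResolutions C] [MonoidalCategory C] [MonoidalPreadditive C]
    [Linear R C] [MonoidalLinear R C]
    (r : R) (X Y : C) (i : ℕ) :
    ((Tor C i).map (r • 𝟙 X)).app Y = ((Tor C i).obj X).map (r • 𝟙 Y) := by
  let P := projectiveResolution Y
  have hwhisker (Z : C) : (r • 𝟙 X) ▷ Z = X ◁ (r • 𝟙 Z) := by simp
  have hcomplex :
      (NatTrans.mapHomologicalComplex ((tensoringLeft C).map (r • 𝟙 X)) _).app P.complex =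
        (((tensoringLeft C).obj X).mapHomologicalComplex _).map (r • 𝟙 P.complex) :=
    HomologicalComplex.hom_ext _ _ fun j => hwhisker (P.complex.X j)
  have hlift : (r • 𝟙 P.complex) ≫ P.π = P.π ≫ (ChainComplex.single₀ C).map (r • 𝟙 Y) := by
    rw [Linear.smul_comp, Category.id_comp]
    ext
    have hπ₀ : P.π.f 0 ≫ (r • 𝟙 Y) = r • P.π.f 0 :=
      (Linear.comp_smul _ _ _ _ _ _).trans (congrArg (r • ·) (Category.comp_id _))
    simpa using! hπ₀.symm
  have hmap := Functor.leftDerived_map_eq ((tensoringLeft C).obj X) i (r • 𝟙 Y) (P := P) (Q := P)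
    (r • 𝟙 P.complex) hlift
  rw [Functor.comp_map, ← hcomplex] at hmap
  exact (P.leftDerived_app_eq _ i).trans hmap.symm

section ModuleCat

variable {R : Type u} [CommRing R]

lemma shortExact_map_tensorRight {S : ShortComplex (ModuleCat.{u} R)}
    (hS : S.ShortExact) (X : ModuleCat.{u} R) [Module.Flat R X] :
    (S.map (tensorRight X)).ShortExact := by
  have : PreservesFiniteColimits (tensorRight X) :=
    preservesFiniteColimits_of_natIso (BraidedCategory.tensorLeftIsoTensorRight X)
  exact hS.map_of_exact (tensorRight X)

lemma mono_Tor_map_app_of_isZero {S : ShortComplex (ModuleCat.{u} R)} (hS : S.ShortExact)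
    {Y : ModuleCat.{u} R} {i : ℕ}
    (hY : IsZero (((Tor (ModuleCat.{u} R) (i + 1)).obj S.X₃).obj Y)) :
    Mono (((Tor (ModuleCat.{u} R) i).map S.f).app Y) := by
  refine mono_leftDerived_app_of_isZero (α := (tensoringLeft _).map S.f)
    (β := (tensoringLeft _).map S.g) (S.map (tensoringLeft _)).zero (fun P hP => ?_) hY
  have : Module.Projective R P := (IsProjective.iff_projective P).2 hP
  exact shortExact_map_tensorRight hS P

lemma isZero_Tor_of_isZero_Tor_quotSMulTop {X Y : ModuleCat.{u} R} {r : R} {i : ℕ}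
    (hX : IsSMulRegular X r) (hr : r ∈ Module.annihilator R Y)
    (hTor : IsZero (((Tor (ModuleCat.{u} R) (i + 1)).obj
      (ModuleCat.of R (QuotSMulTop r X))).obj Y)) :
    IsZero (((Tor (ModuleCat.{u} R) i).obj X).obj Y) := by
  have hmono : Mono (((Tor (ModuleCat.{u} R) i).map (r • 𝟙 X)).app Y) :=
    mono_Tor_map_app_of_isZero hX.smulShortComplex_shortExact hTor
  have hY : r • 𝟙 Y = 0 := by
    ext y
    exact Module.mem_annihilator.1 hr y
  have hzero : ((Tor (ModuleCat.{u} R) i).map (r • 𝟙 X)).app Y = 0 :=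
    (Tor_map_smul_id_app r X Y i).trans (hY ▸ leftDerived_map_zero ((tensoringLeft _).obj X) i Y Y)
  exact IsZero.of_mono_eq_zero _ hzero

open RingTheory.Sequence

lemma isZero_Tor_of_isWeaklyRegular {X Y : ModuleCat.{u} R} {rs : List R}
    (hX : IsWeaklyRegular X rs) (hY : Ideal.ofList rs ≤ Module.annihilator R Y)
    {n i : ℕ} [HasProjectiveDimensionLT Y (n + 1)] (hi : n < i + rs.length) :
    IsZero (((Tor (ModuleCat.{u} R) i).obj X).obj Y) := by
  induction rs generalizing X i with
  | nil =>
    obtain ⟨i, rfl⟩ := Nat.exists_eq_succ_of_ne_zero (Nat.ne_zero_of_lt hi)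
    have := hasProjectiveDimensionLT_of_ge Y (n + 1) (i + 1) hi
    exact isZero_leftDerived_obj_of_hasProjectiveDimensionLT _ Y i
  | cons r rs ih =>
    rw [isWeaklyRegular_cons_iff] at hX
    rw [Ideal.ofList_cons, sup_le_iff, Ideal.span_singleton_le_iff_mem] at hY
    refine isZero_Tor_of_isZero_Tor_quotSMulTop hX.1 hY.1 (ih hX.2 hY.2 ?_)
    rwa [List.length_cons, ← Nat.add_assoc, Nat.add_right_comm] at hi

lemma hasProjectiveDimensionLT_quotient_of_isWeaklyRegular [Small.{v} R]
    {M : ModuleCat.{v} R} {rs : List R} (hM : IsWeaklyRegular M rs) (n : ℕ)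
    [HasProjectiveDimensionLT M n] :
    HasProjectiveDimensionLT (ModuleCat.of R (M ⧸ Ideal.ofList rs • (⊤ : Submodule R M)))
      (n + rs.length) := by
  induction rs generalizing M n with
  | nil =>
    rw [Ideal.ofList_nil, Submodule.bot_smul]
    exact hasProjectiveDimensionLT_of_iso (Submodule.quotEquivOfEqBot ⊥ rfl).toModuleIso.symm _
  | cons r rs ih =>
    rw [isWeaklyRegular_cons_iff] at hM
    have : HasProjectiveDimensionLT (ModuleCat.of R (QuotSMulTop r M)) (n + 1) :=
      hM.1.smulShortComplex_shortExact.hasProjectiveDimensionLT_X₃ n ‹_›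
        (hasProjectiveDimensionLT_of_ge M n (n + 1) n.le_succ)
    have := ih (M := ModuleCat.of R (QuotSMulTop r M)) hM.2 (n + 1)
    rw [List.length_cons, Nat.add_comm rs.length, ← Nat.add_assoc]
    exact hasProjectiveDimensionLT_of_iso
      (Submodule.quotOfListConsSMulTopEquivQuotSMulTopInner M r rs).toModuleIso.symm _

lemma isZero_Tor_quotient_ofList_of_isWeaklyRegular {M : ModuleCat.{u} R} {rs : List R}
    (hR : IsWeaklyRegular R rs) (hM : IsWeaklyRegular M rs) {i : ℕ} (hi : 0 < i) :
    IsZero (((Tor (ModuleCat.{u} R) i).obj M).obj (ModuleCat.of R (R ⧸ Ideal.ofList rs))) := by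
  have : HasProjectiveDimensionLT (ModuleCat.of R (R ⧸ Ideal.ofList rs)) (rs.length + 1) := by
    have hdim := hasProjectiveDimensionLT_quotient_of_isWeaklyRegular (M := ModuleCat.of R R) hR 1
    rwa [smul_eq_mul, Ideal.mul_top, add_comm] at hdim
  exact isZero_Tor_of_isWeaklyRegular hM (Ideal.annihilator_quotient).ge (n := rs.length) (by lia)

end ModuleCat

end Tor

section MvPolynomial

open RingTheory.Sequence MvPolynomial

variable {σ R : Type*} [CommRing R]

lemma isSMulRegular_X_quotient_span_X_image {s : Set σ} {j : σ} (hj : j ∉ s) :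
    IsSMulRegular (MvPolynomial σ R ⧸ Ideal.span (X '' s : Set (MvPolynomial σ R)))
      (X j : MvPolynomial σ R) := by
  rw [isSMulRegular_quotient_iff_mem_of_smul_mem]
  intro p hp
  rw [smul_eq_mul, mul_comm, mem_ideal_span_X_image] at hp
  rw [mem_ideal_span_X_image]
  intro m hm
  obtain ⟨k, hk, hmk⟩ := hp (m + Finsupp.single j 1) (by simpa [coeff_mul_X] using hm)
  have hjk : j ≠ k := fun h => hj (h ▸ hk)
  exact ⟨k, hk, by simpa [hjk] using hmk⟩

lemma ideal_ofList_map_X (l : List σ) :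
    Ideal.ofList (l.map (X : σ → MvPolynomial σ R)) = Ideal.span (X '' {j | j ∈ l}) :=
  congrArg Ideal.span (by ext; simp)

lemma isWeaklyRegular_map_X {l : List σ} (hl : l.Nodup) :
    IsWeaklyRegular (MvPolynomial σ R) (l.map (X : σ → MvPolynomial σ R)) := by
  refine ⟨fun i hi => ?_⟩
  rw [List.length_map] at hi
  have hmem : l[i] ∉ l.take i := by
    rw [List.mem_take_iff_getElem]
    rintro ⟨k, hk, hki⟩
    have := hl.getElem_inj_iff.1 hki
    lia
  rw [smul_eq_mul, Ideal.mul_top, ← List.map_take, ideal_ofList_map_X, List.getElem_map]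
  exact isSMulRegular_X_quotient_span_X_image hmem

lemma isWeaklyRegular_map_X_iff {A : Type*} [CommRing A] [Algebra R A] (f : σ → A) (l : List σ) :
    letI : Algebra (MvPolynomial σ R) A := (aeval f).toRingHom.toAlgebra
    IsWeaklyRegular A (l.map (X : σ → MvPolynomial σ R)) ↔ IsWeaklyRegular A (l.map f) := by
  let : Algebra (MvPolynomial σ R) A := (aeval f).toRingHom.toAlgebra
  have hf : algebraMap (MvPolynomial σ R) A ∘ X = f := funext (aeval_X f)
  rw [← isWeaklyRegular_map_algebraMap_iff A A, List.map_map, hf]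

end MvPolynomial

theorem tor_eq_zero_of_isRegular_general (R : Type u) [CommRing R] (A : Type u) [CommRing A]
    [Algebra R A] (n : ℕ) (f : Fin n → A)
    (hf : RingTheory.Sequence.IsWeaklyRegular A (List.ofFn f)) (i : ℕ) (hi : 0 < i) :
    letI : Algebra (MvPolynomial (Fin n) R) A := (MvPolynomial.aeval f).toRingHom.toAlgebra
    IsZero (((Tor (ModuleCat (MvPolynomial (Fin n) R)) i).obj
        (ModuleCat.of (MvPolynomial (Fin n) R) A)).obj
      (ModuleCat.of (MvPolynomial (Fin n) R)
        (MvPolynomial (Fin n) R ⧸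
          Ideal.span (Set.range (MvPolynomial.X : Fin n → MvPolynomial (Fin n) R))))) := by
  let : Algebra (MvPolynomial (Fin n) R) A := (MvPolynomial.aeval f).toRingHom.toAlgebra
  have hP := isWeaklyRegular_map_X (R := R) (List.nodup_finRange n)
  have hA := (isWeaklyRegular_map_X_iff (R := R) f (List.finRange n)).2 (List.ofFn_eq_map ▸ hf)
  have hspan : Ideal.ofList ((List.finRange n).map MvPolynomial.X) =
      Ideal.span (Set.range (MvPolynomial.X : Fin n → MvPolynomial (Fin n) R)) := by
    simp [ideal_ofList_map_X]
  rw [← hspan]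
  exact isZero_Tor_quotient_ofList_of_isWeaklyRegular hP (M := ModuleCat.of _ A) hA hi

/-- **Koszul regularity of regular sequences.**
If `f₁, …, fₙ` is a regular sequence in a commutative ring `A`, and we regard `A` as an
algebra over the polynomial ring `P = ℤ[T₁,…,Tₙ]` via `Tᵢ ↦ fᵢ`, then
`Torᵢ^P (A, P/(T₁,…,Tₙ)) = 0` for all `i > 0`. -/
theorem tor_eq_zero_of_isRegular (A : Type) [CommRing A] (n : ℕ) (f : Fin n → A)
    (hf : RingTheory.Sequence.IsRegular A (List.ofFn f)) (i : ℕ) (hi : 0 < i) :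
    letI : Algebra (MvPolynomial (Fin n) ℤ) A := (MvPolynomial.aeval f).toRingHom.toAlgebra
    IsZero (((Tor (ModuleCat (MvPolynomial (Fin n) ℤ)) i).obj
        (ModuleCat.of (MvPolynomial (Fin n) ℤ) A)).obj
      (ModuleCat.of (MvPolynomial (Fin n) ℤ)
        (MvPolynomial (Fin n) ℤ ⧸
          Ideal.span (Set.range (MvPolynomial.X : Fin n → MvPolynomial (Fin n) ℤ))))) :=
  tor_eq_zero_of_isRegular_general ℤ A n f hf.toIsWeaklyRegular i hi
end

section
/- Let A be a commutative ring, f₁,…,fₙ ∈ A a regular sequence, and I = (f₁,…,fₙ). If F ∈ A[X₁,…,Xₙ] is a homogeneous polynomial of degree d such that F(f₁,…,fₙ) ∈ I^{d+1}, then every coefficient of F lies in I. (Regular sequences are quasi-regular.) -/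
/-!
Let `I = (f₁, …, fₙ)` and `J = (f₁, …, fₙ₋₁)`, and induct on `n`. Subtracting from `F` a form of the
same degree with coefficients in `I` and the same value reduces to the case `F(f) = 0`. Write
`F = G + Xₙ H` with `G` a form in `X₁, …, Xₙ₋₁`. Then `fₙ H(f) = -G(f) ∈ J ^ d`. By the induction
hypothesis on `n`, the element `fₙ` is regular not only modulo `J` but modulo every power of `J`, so
`H(f) ∈ J ^ d`. Since `J ^ d ⊆ I ^ d`, induction on the degree puts the coefficients of `H` in `I`.
Moreover `H(f) = L(f)` for a form `L` of degree `d` in `X₁, …, Xₙ₋₁`, and `G + fₙ L` vanishes at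
`f`, so its coefficients lie in `J` and those of `G` lie in `I`.
-/

open MvPolynomial

section Homogeneous

variable {σ τ A : Type*} [CommSemiring A] {d : ℕ}

lemma isHomogeneous_modMonomial {F : MvPolynomial σ A} (hF : F.IsHomogeneous d) (s : σ →₀ ℕ) :
    (F.modMonomial s).IsHomogeneous d := by
  intro m hm
  by_cases hsm : s ≤ m
  · exact absurd (coeff_modMonomial_of_le F hsm) hm
  · exact hF (by rwa [coeff_modMonomial_of_not_le F hsm] at hm)

lemma isHomogeneous_divMonomial {F : MvPolynomial σ A} {s : σ →₀ ℕ}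
    (hF : F.IsHomogeneous (d + s.degree)) : (F.divMonomial s).IsHomogeneous d := by
  intro m hm
  rw [coeff_divMonomial] at hm
  have hdeg : (s + m).degree = d + s.degree := not_imp_comm.1 hF.coeff_eq_zero hm
  rw [map_add, add_comm, Nat.add_right_cancel_iff] at hdeg
  rwa [Finsupp.degree_eq_weight_one] at hdeg

lemma notMem_vars_modMonomial_single (F : MvPolynomial σ A) (i : σ) :
    i ∉ (F.modMonomial (Finsupp.single i 1)).vars := by
  rw [mem_vars_iff_mem_support]
  rintro ⟨m, hm, him⟩
  have hle : Finsupp.single i 1 ≤ m := by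
    simpa [Nat.one_le_iff_ne_zero] using him
  exact mem_support_iff.1 hm (coeff_modMonomial_of_le F hle)

lemma exists_eq_rename_add_X_mul {e : σ → τ} (he : e.Injective) {i : τ}
    (hi : ∀ j ≠ i, j ∈ Set.range e) {F : MvPolynomial τ A} (hF : F.IsHomogeneous (d + 1)) :
    ∃ (G : MvPolynomial σ A) (H : MvPolynomial τ A),
      G.IsHomogeneous (d + 1) ∧ H.IsHomogeneous d ∧ F = rename e G + X i * H := by
  obtain ⟨G, hG⟩ : ∃ G, rename e G = F.modMonomial (Finsupp.single i 1) := by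
    refine exists_rename_eq_of_vars_subset_range _ e he fun j hj => hi j ?_
    rintro rfl
    exact notMem_vars_modMonomial_single F j hj
  refine ⟨G, F.divMonomial (Finsupp.single i 1), ?_, ?_, ?_⟩
  · rw [← IsHomogeneous.rename_isHomogeneous_iff he, hG]
    exact isHomogeneous_modMonomial hF _
  · exact isHomogeneous_divMonomial (by rwa [Finsupp.degree_single])
  · rw [hG, modMonomial_add_divMonomial_single]

lemma rename_mem_map_C (e : σ → τ) {K : Ideal A} {F : MvPolynomial σ A}
    (hF : F ∈ K.map (C : A →+* MvPolynomial σ A)) : rename e F ∈ K.map C := by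
  have hle : K.map C ≤ (K.map C).comap (rename e : MvPolynomial σ A →ₐ[A] MvPolynomial τ A) :=
    Ideal.map_le_iff_le_comap.2 fun a ha => by simpa using Ideal.mem_map_of_mem C ha
  exact hle hF

end Homogeneous

section QuasiRegular

variable {σ τ A : Type*} [CommRing A]

lemma mem_mul_span_pow_iff_exists_isHomogeneous {f : σ → A} {K : Ideal A} {d : ℕ} {x : A} :
    x ∈ K * Ideal.span (Set.range f) ^ d ↔
      ∃ F : MvPolynomial σ A, F.IsHomogeneous d ∧ F ∈ K.map C ∧ eval f F = x := by
  constructor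
  · intro hx
    induction hx using Submodule.mul_induction_on' with
    | mem_mul_mem a ha y hy =>
      obtain ⟨F, hF, rfl⟩ := (Ideal.mem_span_pow_iff_exists_isHomogeneous f y).1 hy
      have haF : C a * F ∈ K.map C := Ideal.mul_mem_right F _ (Ideal.mem_map_of_mem C ha)
      exact ⟨C a * F, hF.C_mul a, haF, by simp⟩
    | add x _ y _ hx hy =>
      obtain ⟨F, hF, hFK, rfl⟩ := hx
      obtain ⟨G, hG, hGK, rfl⟩ := hy
      exact ⟨F + G, hF.add hG, add_mem hFK hGK, map_add _ _ _⟩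
  · rintro ⟨F, hF, hFK, rfl⟩
    rw [eval_eq]
    refine sum_mem fun m hm => Ideal.mul_mem_mul (mem_map_C_iff.1 hFK m) ?_
    rw [Ideal.mem_span_pow_iff_exists_isHomogeneous]
    have hdeg : m.degree = d := not_imp_comm.1 hF.coeff_eq_zero (mem_support_iff.1 hm)
    refine ⟨monomial m 1, isHomogeneous_monomial 1 hdeg, ?_⟩
    rw [eval_monomial, one_mul, Finsupp.prod]

/-- A family `f` generating the ideal `I` is quasi-regular if every form `F` of degree `d` with
`F(f) ∈ I ^ (d + 1)` has all its coefficients in `I`. The latter is encoded as membership of `F` in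
the extension of `I` to the polynomial ring; see `MvPolynomial.mem_map_C_iff`. -/
def IsQuasiRegularFamily (f : σ → A) : Prop :=
  ∀ ⦃d : ℕ⦄ ⦃F : MvPolynomial σ A⦄, F.IsHomogeneous d →
    eval f F ∈ Ideal.span (Set.range f) ^ (d + 1) → F ∈ (Ideal.span (Set.range f)).map C

lemma mem_map_C_of_eval_mem_pow_succ {f : σ → A} {d : ℕ}
    (h : ∀ F : MvPolynomial σ A, F.IsHomogeneous d → eval f F = 0 →
      F ∈ (Ideal.span (Set.range f)).map C)
    {F : MvPolynomial σ A} (hF : F.IsHomogeneous d)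
    (hFf : eval f F ∈ Ideal.span (Set.range f) ^ (d + 1)) :
    F ∈ (Ideal.span (Set.range f)).map C := by
  rw [pow_succ', mem_mul_span_pow_iff_exists_isHomogeneous] at hFf
  obtain ⟨K, hK, hKI, hKF⟩ := hFf
  have hsub : F - K ∈ (Ideal.span (Set.range f)).map C :=
    h _ (hF.sub hK) (by rw [map_sub, hKF, sub_self])
  simpa only [sub_add_cancel] using add_mem hsub hKI

namespace IsQuasiRegularFamily

lemma of_isEmpty [IsEmpty σ] (f : σ → A) : IsQuasiRegularFamily f := by
  intro d F _ hFf
  obtain ⟨a, rfl⟩ := C_surjective σ F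
  rw [eval_C] at hFf
  exact Ideal.mem_map_of_mem C (Ideal.pow_le_self d.succ_ne_zero hFf)

lemma isSMulRegular_quotient_pow {f : σ → A} (h : IsQuasiRegularFamily f) {a : A}
    (ha : IsSMulRegular (A ⧸ Ideal.span (Set.range f)) a) (d : ℕ) :
    IsSMulRegular (A ⧸ Ideal.span (Set.range f) ^ d) a := by
  refine (isSMulRegular_quotient_iff_mem_of_smul_mem _ a).2 fun x hx => ?_
  induction d with
  | zero => simp
  | succ d ih =>
    obtain ⟨G, hG, rfl⟩ := (Ideal.mem_span_pow_iff_exists_isHomogeneous f x).1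
      (ih (Ideal.pow_le_pow_right d.le_succ hx))
    have haG : C a * G ∈ (Ideal.span (Set.range f)).map C :=
      h (hG.C_mul a) (by simpa using hx)
    have hGI : G ∈ (Ideal.span (Set.range f)).map C := mem_map_C_iff.2 fun m =>
      (isSMulRegular_quotient_iff_mem_of_smul_mem _ a).1 ha _
        (by simpa using mem_map_C_iff.1 haG m)
    rw [pow_succ', mem_mul_span_pow_iff_exists_isHomogeneous]
    exact ⟨G, hG, hGI, rfl⟩

lemma mem_map_C_of_eval_add_mul_eq_zero {g : σ → A} (h : IsQuasiRegularFamily g) {d : ℕ} {a y : A}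
    {G : MvPolynomial σ A} (hG : G.IsHomogeneous d) (hy : y ∈ Ideal.span (Set.range g) ^ d)
    (hGy : eval g G + a * y = 0) : G ∈ (Ideal.span (Set.range g) ⊔ Ideal.span {a}).map C := by
  obtain ⟨L, hL, rfl⟩ := (Ideal.mem_span_pow_iff_exists_isHomogeneous g y).1 hy
  have hGL : G + C a * L ∈ (Ideal.span (Set.range g)).map C :=
    h (hG.add (hL.C_mul a)) (by simp [hGy])
  have haL : C a * L ∈ (Ideal.span {a}).map C :=
    Ideal.mul_mem_right _ _ (Ideal.mem_map_of_mem C (Ideal.mem_span_singleton_self a))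
  simpa only [add_sub_cancel_right] using
    sub_mem (Ideal.map_mono le_sup_left hGL) (Ideal.map_mono le_sup_right haL)

lemma of_comp {f : τ → A} {e : σ → τ} (h : IsQuasiRegularFamily (f ∘ e)) (he : e.Injective)
    {i : τ} (hi : ∀ j ≠ i, j ∈ Set.range e)
    (hreg : IsSMulRegular (A ⧸ Ideal.span (Set.range (f ∘ e))) (f i)) :
    IsQuasiRegularFamily f := by
  set I := Ideal.span (Set.range f)
  set J := Ideal.span (Set.range (f ∘ e))
  have hJI : J ≤ I := Ideal.span_mono (Set.range_comp_subset_range e f)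
  have hiI : Ideal.span {f i} ≤ I := Ideal.span_mono (by simp)
  intro d
  induction d with
  | zero =>
    intro F hF hFf
    obtain ⟨a, rfl⟩ : ∃ a, F = C a :=
      ⟨_, totalDegree_eq_zero_iff_eq_C.1 ((totalDegree_zero_iff_isHomogeneous τ).2 hF)⟩
    exact Ideal.mem_map_of_mem C (by simpa using hFf)
  | succ d ih =>
    refine fun _ => mem_map_C_of_eval_mem_pow_succ fun F hF hFf => ?_
    obtain ⟨G, H, hG, hH, rfl⟩ := exists_eq_rename_add_X_mul he hi hF
    have hGH : eval (f ∘ e) G + f i * eval f H = 0 := by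
      simpa only [map_add, map_mul, eval_rename, eval_X] using hFf
    have hGJ : eval (f ∘ e) G ∈ J ^ (d + 1) :=
      (Ideal.mem_span_pow_iff_exists_isHomogeneous _ _).2 ⟨G, hG, rfl⟩
    have hHJ : eval f H ∈ J ^ (d + 1) := by
      refine (isSMulRegular_quotient_iff_mem_of_smul_mem _ _).1
        (h.isSMulRegular_quotient_pow hreg (d + 1)) _ ?_
      rw [smul_eq_mul, eq_neg_of_add_eq_zero_right hGH]
      exact neg_mem hGJ
    have hHI : H ∈ I.map C := ih hH (Ideal.pow_right_mono hJI _ hHJ)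
    have hGI : G ∈ I.map C :=
      Ideal.map_mono (sup_le hJI hiI) (h.mem_map_C_of_eval_add_mul_eq_zero hG hHJ hGH)
    exact add_mem (rename_mem_map_C e hGI) (Ideal.mul_mem_left _ _ hHI)

lemma of_isWeaklyRegular {n : ℕ} {f : Fin n → A}
    (hf : RingTheory.Sequence.IsWeaklyRegular A (List.ofFn f)) : IsQuasiRegularFamily f := by
  induction n with
  | zero => exact of_isEmpty f
  | succ n ih =>
    rw [List.ofFn_succ', List.concat_eq_append,
      RingTheory.Sequence.isWeaklyRegular_append_iff,
      RingTheory.Sequence.isWeaklyRegular_singleton_iff] at hf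
    obtain ⟨hinit, hlast⟩ := hf
    refine (ih hinit).of_comp (Fin.castSucc_injective n)
      (fun j hj => Fin.exists_castSucc_eq.2 hj) ?_
    have hspan : Ideal.span (Set.range (f ∘ Fin.castSucc)) =
        Ideal.ofList (List.ofFn fun i : Fin n => f i.castSucc) • ⊤ := by
      simp [Ideal.ofList, List.mem_ofFn, Set.range]
    rw [hspan]
    exact hlast

end IsQuasiRegularFamily

end QuasiRegular

/-- **Regular sequences are quasi-regular.**
Let `f₁, …, fₙ` be a regular sequence in a commutative ring `A` and `I = (f₁, …, fₙ)`.
If `F ∈ A[X₁,…,Xₙ]` is homogeneous of degree `d` and `F(f₁,…,fₙ) ∈ I^(d+1)`, then every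
coefficient of `F` lies in `I`. -/
theorem coeff_mem_of_isRegular_of_eval_mem_pow (A : Type*) [CommRing A] (n : ℕ)
    (f : Fin n → A) (hf : RingTheory.Sequence.IsRegular A (List.ofFn f))
    (d : ℕ) (F : MvPolynomial (Fin n) A) (hF : F.IsHomogeneous d)
    (hFf : MvPolynomial.eval f F ∈ Ideal.span (Set.range f) ^ (d + 1)) :
    ∀ m : Fin n →₀ ℕ, MvPolynomial.coeff m F ∈ Ideal.span (Set.range f) := by
  exact mem_map_C_iff.1 (IsQuasiRegularFamily.of_isWeaklyRegular hf.toIsWeaklyRegular hF hFf)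
end

section
/- Let R be a nontrivial commutative ring, n ≥ 1, and fix k with 1 ≤ k ≤ n. In the polynomial ring B = R[T₁,…,Tₙ][X_r : r ∈ {1,…,n}, r ≠ k] (polynomial ring in the n variables Tᵢ and the n−1 additional variables X_r), the sequence (T_k·X_r − T_r)_{r ≠ k}, ordered by increasing r, is a regular sequence. (These are the defining relations of the standard chart Spec A_k, A_k = ℤ[T₁/T_k,…,Tₙ/T_k,T_k], of the blow-up of affine n-space at the origin.) -/
open MvPolynomial

/-!
The substitution `T_r ↦ T_k X_r - T_r` for `r ≠ k`, with `T_k` and all `X_r` fixed, is an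
involution of `R[T][X]`. It carries the variables `T_r` with `r ≠ k` to the chart relations.
Distinct variables form a regular sequence in `R[T]`, hence in `R[T][X]`, which is free over
`R[T]`, and an automorphism preserves regular sequences.
-/

section Variables

variable {σ R : Type*} [CommRing R]

lemma isSMulRegular_quotient_span_X_image {s : Set σ} {i : σ} (hi : i ∉ s) :
    IsSMulRegular (MvPolynomial σ R ⧸ Ideal.span (X '' s : Set (MvPolynomial σ R)))
      (X i : MvPolynomial σ R) := by
  rw [isSMulRegular_iff_right_eq_zero_of_smul]
  intro x hx
  obtain ⟨p, rfl⟩ := Ideal.Quotient.mk_surjective x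
  have hmul : X i * p ∈ Ideal.span (X '' s : Set (MvPolynomial σ R)) :=
    Ideal.Quotient.eq_zero_iff_mem.mp hx
  rw [mem_ideal_span_X_image] at hmul
  rw [Ideal.Quotient.eq_zero_iff_mem, mem_ideal_span_X_image]
  intro m hm
  obtain ⟨j, hj, hne⟩ := hmul (Finsupp.single i 1 + m) <| by
    rw [mem_support_iff, coeff_X_mul]
    exact mem_support_iff.mp hm
  have hij : i ≠ j := fun h => hi (h ▸ hj)
  exact ⟨j, hj, by simpa [hij] using hne⟩

lemma ofList_map_X (l : List σ) :
    Ideal.ofList (l.map (X : σ → MvPolynomial σ R)) = Ideal.span (X '' {i | i ∈ l}) :=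
  congrArg Ideal.span (Set.ext fun _ => List.mem_map)

lemma isRegular_map_X [Nontrivial R] {l : List σ} (hl : l.Nodup) :
    RingTheory.Sequence.IsRegular (MvPolynomial σ R) (l.map (X : σ → MvPolynomial σ R)) where
  regular_mod_prev i hi := by
    rw [← List.map_take, List.getElem_map, smul_eq_mul, Ideal.mul_top, ofList_map_X]
    refine isSMulRegular_quotient_span_X_image fun hmem => ?_
    obtain ⟨j, hj, hji⟩ := List.mem_take_iff_getElem.mp hmem
    have := hl.getElem_inj_iff.mp hji
    omega
  top_ne_smul h := by
    rw [smul_eq_mul, Ideal.mul_top, ofList_map_X, eq_comm, Ideal.eq_top_iff_one,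
      mem_ideal_span_X_image] at h
    simpa using h 0 (by simp)

end Variables

lemma isRegular_map_ringEquiv {A B : Type*} [CommRing A] [CommRing B] (e : A ≃+* B)
    {l : List A} (hl : RingTheory.Sequence.IsRegular A l) :
    RingTheory.Sequence.IsRegular B (l.map e) :=
  (e.toAddEquiv.isRegular_congr <| List.forall₂_map_right_iff.mpr <|
    List.forall₂_same.mpr fun a _ x => map_mul e a x).mp hl

section Chart

variable (R : Type*) [CommRing R] {ι : Type*} [DecidableEq ι] (k : ι)

/-- The substitution `T_r ↦ T_k X_r - T_r` for `r ≠ k` on `R[T][X]`, fixing `T_k` and every `X_r`;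
it carries the variables `T_r` to the relations of the `k`-th chart of the blow-up. -/
noncomputable def chartSubst :
    MvPolynomial {r : ι // r ≠ k} (MvPolynomial ι R) →ₐ[R]
      MvPolynomial {r : ι // r ≠ k} (MvPolynomial ι R) :=
  aevalTower
    (aeval fun r => if h : r ≠ k then C (X k) * X ⟨r, h⟩ - C (X r) else C (X r)) X

lemma chartSubst_X (r : {r : ι // r ≠ k}) : chartSubst R k (X r) = X r :=
  aevalTower_X _ _ r

variable {k} in
lemma chartSubst_C_X_of_ne {r : ι} (h : r ≠ k) :
    chartSubst R k (C (X r)) = C (X k) * X ⟨r, h⟩ - C (X r) := by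
  simp [chartSubst, h]

lemma chartSubst_C_X_self : chartSubst R k (C (X k)) = C (X k) := by
  simp [chartSubst]

lemma chartSubst_comp_self : (chartSubst R k).comp (chartSubst R k) = AlgHom.id R _ := by
  refine algHom_ext' (algHom_ext fun r => ?_) fun r => ?_
  · change chartSubst R k (chartSubst R k (C (X r))) = C (X r)
    obtain rfl | h := eq_or_ne r k
    · rw [chartSubst_C_X_self, chartSubst_C_X_self]
    · rw [chartSubst_C_X_of_ne R h, map_sub, map_mul, chartSubst_C_X_self, chartSubst_X,
        chartSubst_C_X_of_ne R h, sub_sub_cancel]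
  · simp only [AlgHom.comp_apply, chartSubst_X, AlgHom.id_apply]

/-- The substitution `chartSubst` as an automorphism, being its own inverse. -/
noncomputable def chartInvolution :
    MvPolynomial {r : ι // r ≠ k} (MvPolynomial ι R) ≃ₐ[R]
      MvPolynomial {r : ι // r ≠ k} (MvPolynomial ι R) :=
  .ofAlgHom (chartSubst R k) (chartSubst R k) (chartSubst_comp_self R k) (chartSubst_comp_self R k)

lemma filterMap_chart_relations_eq_map (l : List ι) :
    (l.filterMap fun r =>
        if h : r ≠ k then
          some (C (X k) * X (⟨r, h⟩ : {r : ι // r ≠ k}) - C (X r))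
        else none :
      List (MvPolynomial {r : ι // r ≠ k} (MvPolynomial ι R))) =
      (((l.filter (· ≠ k)).map X).map C).map (chartInvolution R k) := by
  rw [List.map_map, List.map_map, ← List.filterMap_eq_map, List.filterMap_filter]
  refine List.filterMap_congr fun r _ => ?_
  by_cases h : r = k
  · simp [h]
  · simp [h, chartInvolution, chartSubst_C_X_of_ne R h]

theorem isRegular_blowup_chart_relations_general [Nontrivial R] {l : List ι} (hl : l.Nodup) :
    RingTheory.Sequence.IsRegular
      (MvPolynomial {r : ι // r ≠ k} (MvPolynomial ι R))
      (l.filterMap fun r =>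
          if h : r ≠ k then
            some (C (X k) * X (⟨r, h⟩ : {r : ι // r ≠ k}) - C (X r))
          else none :
        List (MvPolynomial {r : ι // r ≠ k} (MvPolynomial ι R))) := by
  have hT : RingTheory.Sequence.IsRegular (MvPolynomial ι R) ((l.filter (· ≠ k)).map X) :=
    isRegular_map_X (hl.filter _)
  rw [filterMap_chart_relations_eq_map]
  exact isRegular_map_ringEquiv (chartInvolution R k).toRingEquiv hT.of_faithfullyFlat

end Chart

/-- In the polynomial ring `B = R[T₁,…,Tₙ][Xᵣ : r ≠ k]` over a nontrivial commutative
ring `R`, the sequence `(T_k · X_r − T_r)_{r ≠ k}` (ordered by increasing `r`) is a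
regular sequence.  These are the defining relations of the standard chart
`Spec ℤ[T₁/T_k, …, Tₙ/T_k, T_k]` of the blow-up of affine `n`-space at the origin. -/
theorem isRegular_blowup_chart_relations (R : Type*) [CommRing R] [Nontrivial R]
    (n : ℕ) (k : Fin n) :
    RingTheory.Sequence.IsRegular
      (MvPolynomial {r : Fin n // r ≠ k} (MvPolynomial (Fin n) R))
      (((List.finRange n).filterMap fun r =>
          if h : r ≠ k then
            some (C (X k) * X (⟨r, h⟩ : {r : Fin n // r ≠ k}) - C (X r))
          else none :
        List (MvPolynomial {r : Fin n // r ≠ k} (MvPolynomial (Fin n) R)))) :=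
  isRegular_blowup_chart_relations_general R k (List.nodup_finRange n)
end

section
/- Let R be a commutative ring, and let A and B be smooth R-algebras (i.e. formally smooth and of finite presentation over R). Let f : A → B be a surjective R-algebra homomorphism with kernel I. Then the conormal module I/I² is a finitely generated projective B-module. (This is the classical content of the fact that a closed immersion between schemes smooth over a base is a regular, i.e. quasi-smooth, immersion.) -/
universe u

/-! A section `B → A/I²` of the surjection `A/I² → B`, which exists because `B` is formally smooth
and the kernel `I/I²` has square zero, corresponds to a retraction of the map
`I/I² → B ⊗[A] Ω[A⁄R]` induced by the universal derivation. So `I/I²` is a direct summand of the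
finite projective `B`-module `B ⊗[A] Ω[A⁄R]`. -/

open KaehlerDifferential TensorProduct

section ConormalSequence

variable (R : Type*) {A B : Type*} [CommRing R] [CommRing A] [CommRing B] [Algebra R A]

theorem exists_section_kerSquareLift [Algebra R B] [Algebra.FormallySmooth R B] (f : A →ₐ[R] B)
    (hf : Function.Surjective f) :
    ∃ g : B →ₐ[R] A ⧸ RingHom.ker f.toRingHom ^ 2, f.kerSquareLift.comp g = AlgHom.id R B := by
  have kerSquareLift_surjective : Function.Surjective f.kerSquareLift :=
    .of_comp (g := Ideal.Quotient.mk (RingHom.ker f.toRingHom ^ 2)) hf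
  have ker_nilpotent : IsNilpotent (RingHom.ker f.kerSquareLift.toRingHom) :=
    ⟨2, f.ker_kerSquareLift ▸ Ideal.cotangentIdeal_square _⟩
  exact ⟨_, Algebra.FormallySmooth.comp_liftOfSurjective _ _ kerSquareLift_surjective ker_nilpotent⟩

variable [Algebra R B] [Algebra A B] [IsScalarTower R A B] [Algebra.FormallySmooth R B]
  (hf : Function.Surjective (algebraMap A B))
include hf

theorem exists_retraction_kerCotangentToTensor :
    ∃ r : B ⊗[A] Ω[A⁄R] →ₗ[A] (RingHom.ker (algebraMap A B)).Cotangent,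
      r ∘ₗ kerCotangentToTensor R A B = LinearMap.id := by
  obtain ⟨g, hg⟩ := exists_section_kerSquareLift R (IsScalarTower.toAlgHom R A B) hf
  let r := (retractionKerCotangentToTensorEquivSection hf).symm ⟨g, hg⟩
  exact ⟨r.1, r.2⟩

variable [Module B (RingHom.ker (algebraMap A B)).Cotangent]
  [IsScalarTower A B (RingHom.ker (algebraMap A B)).Cotangent]

theorem exists_retraction_extendScalars_kerCotangentToTensor :
    ∃ r : B ⊗[A] Ω[A⁄R] →ₗ[B] (RingHom.ker (algebraMap A B)).Cotangent,
      r ∘ₗ (kerCotangentToTensor R A B).extendScalarsOfSurjective hf = LinearMap.id := by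
  obtain ⟨r, hr⟩ := exists_retraction_kerCotangentToTensor R hf
  exact ⟨r.extendScalarsOfSurjective hf, LinearMap.ext fun x ↦ LinearMap.congr_fun hr x⟩

theorem finite_cotangent_ker_algebraMap [Module.Finite A Ω[A⁄R]] :
    Module.Finite B (RingHom.ker (algebraMap A B)).Cotangent := by
  obtain ⟨r, hr⟩ := exists_retraction_extendScalars_kerCotangentToTensor R hf
  exact .of_surjective r (LinearMap.surjective_of_comp_eq_id _ r hr)

theorem projective_cotangent_ker_algebraMap [Module.Projective A Ω[A⁄R]] :
    Module.Projective B (RingHom.ker (algebraMap A B)).Cotangent := by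
  obtain ⟨r, hr⟩ := exists_retraction_extendScalars_kerCotangentToTensor R hf
  exact .of_split _ r hr

end ConormalSequence

theorem isScalarTower_cotangent_ker {A B : Type*} [CommRing A] [CommRing B] (f : A →+* B)
    (hf : Function.Surjective f) :
    letI := f.toAlgebra
    letI : Module B (RingHom.ker f).Cotangent :=
      Module.compHom _ (RingHom.quotientKerEquivOfSurjective hf).symm.toRingHom
    IsScalarTower A B (RingHom.ker f).Cotangent := by
  let := f.toAlgebra
  let : Module B (RingHom.ker f).Cotangent :=
    Module.compHom _ (RingHom.quotientKerEquivOfSurjective hf).symm.toRingHom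
  refine .of_algebraMap_smul fun a x ↦ ?_
  calc
    f a • x = (RingHom.quotientKerEquivOfSurjective hf).symm (f a) • x := rfl
    _ = Ideal.Quotient.mk (RingHom.ker f) a • x := by
      rw [RingHom.quotientKerEquivOfSurjective_symm_apply]
    _ = a • x := algebraMap_smul (A ⧸ RingHom.ker f) a x

theorem cotangent_finite_projective_of_smooth_general (R : Type*) {A B : Type*} [CommRing R]
    [CommRing A] [CommRing B] [Algebra R A] [Algebra R B] [Module.Finite A Ω[A⁄R]]
    [Module.Projective A Ω[A⁄R]] [Algebra.FormallySmooth R B]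
    (f : A →ₐ[R] B) (hf : Function.Surjective f) :
    letI : Module B (RingHom.ker f.toRingHom).Cotangent :=
      Module.compHom _ (RingHom.quotientKerEquivOfSurjective (f := f.toRingHom)
        hf).symm.toRingHom
    Module.Finite B (RingHom.ker f.toRingHom).Cotangent ∧
      Module.Projective B (RingHom.ker f.toRingHom).Cotangent := by
  let : Algebra A B := f.toRingHom.toAlgebra
  let : Module B (RingHom.ker f.toRingHom).Cotangent :=
    Module.compHom _ (RingHom.quotientKerEquivOfSurjective (f := f.toRingHom)
      hf).symm.toRingHom
  have : IsScalarTower R A B := .of_algebraMap_eq' f.comp_algebraMap.symm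
  have : IsScalarTower A B (RingHom.ker (algebraMap A B)).Cotangent :=
    isScalarTower_cotangent_ker f.toRingHom hf
  exact ⟨finite_cotangent_ker_algebraMap R hf, projective_cotangent_ker_algebraMap R hf⟩

/-- Let `A` and `B` be smooth `R`-algebras and `f : A → B` a surjective `R`-algebra
homomorphism with kernel `I`.  Then the conormal module `I/I²` is a finitely generated
projective `B`-module (where `B` acts on `I/I²` through the isomorphism
`A/I ≃ B` induced by `f`). -/
theorem cotangent_finite_projective_of_smooth (R A B : Type u) [CommRing R] [CommRing A]
    [CommRing B] [Algebra R A] [Algebra R B] [Algebra.Smooth R A] [Algebra.Smooth R B]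
    (f : A →ₐ[R] B) (hf : Function.Surjective f) :
    letI : Module B (RingHom.ker f.toRingHom).Cotangent :=
      Module.compHom _ (RingHom.quotientKerEquivOfSurjective (f := f.toRingHom)
        hf).symm.toRingHom
    Module.Finite B (RingHom.ker f.toRingHom).Cotangent ∧
      Module.Projective B (RingHom.ker f.toRingHom).Cotangent :=
  cotangent_finite_projective_of_smooth_general R f hf
end
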